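/- Fix α > 1, a prime b, m ∈ ℕ, N = b^m, product weights γ_j > 0, nondecreasing reduction indices 0 = w₁ ≤ w₂ ≤ ⋯ with w_j ∈ ℕ₀, reduced search spaces Z_{N,w_j} (equal to {1} when w_j ≥ m), and exclusion sets E_j ⊊ Z_{N,w_j}. Let z̃ = (z̃₁,…,z̃_s) be constructed by the reduced projection-corrected CBC algorithm (z̃₁ = 1; for d+1 ≤ t₂−1, z̃_{d+1} = b^{w_{d+1}} z_{d+1} with z_{d+1} ∈ Z_{N,w_{d+1}} \ E_{d+1} minimizing the squared worst-case error; z̃_j = 0 for j ≥ t₂). Then for all 1 ≤ d ≤ s and all λ ∈ (1/α, 1]: e²(z̃₁,…,z̃_d) ≤ ( Σ_{u ⊆ [d]} γ_u^λ (4ζ(αλ))^{|u|} / φ(b^{max{0, m − max_{j∈u} w_j}}) · ∏_{j∈u} |Z_{N,w_j}| / (|Z_{N,w_j}| − |E_j|) )^{1/λ}, where γ_u = ∏_{j∈u} γ_j, φ is Euler's totient, and max ∅ = 0. -/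

import Mathlib

/-- The Riemann zeta function for real argument, `ζ(x) = Σ_{n ≥ 1} n^{-x}`. -/
noncomputable def zeta (x : ℝ) : ℝ := ∑' n : ℕ, ((n : ℝ) + 1) ^ (-x)

/-- The weight `r_α(γ,h) = ∏_{j : h_j ≠ 0} γ_j |h_j|^{-α}` for `h ∈ ℤ^d`. -/
noncomputable def rprod (γ : ℕ → ℝ) (α : ℝ) {d : ℕ} (h : Fin d → ℤ) : ℝ :=
  ∏ j, if h j = 0 then 1 else γ (j.1 + 1) * (|h j| : ℝ) ^ (-α)

/-- Squared worst-case error `e²(z) = Σ_{h ∈ ℤ^d \ {0}, h·z ≡ 0 (mod N)} r_α(γ,h)`. -/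
noncomputable def e2 (N : ℕ) (γ : ℕ → ℝ) (α : ℝ) {d : ℕ} (z : Fin d → ℤ) : ℝ :=
  ∑' h : Fin d → ℤ, if h ≠ 0 ∧ (N : ℤ) ∣ ∑ j, h j * z j then rprod γ α h else 0

/-- The reduced search space `Z_{N,w}` for `N = b^m`:
`{z ∈ {1,…,b^{m-w}-1} : gcd(z,b^m) = 1}` if `w < m`, and `{1}` otherwise. -/
def Zred (b m w : ℕ) : Finset ℕ :=
  if w < m then (Finset.Ico 1 (b ^ (m - w))).filter fun z => Nat.gcd z (b ^ m) = 1
  else {1}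

open scoped ENNReal

/-- `|k|^{-x}` for `k ≠ 0`, extended by zero, as an extended nonnegative real. -/
noncomputable def pwE (x : ℝ) (k : ℤ) : ℝ≥0∞ :=
  if k = 0 then 0 else ENNReal.ofReal (|(k : ℝ)| ^ (-x))

/-- The increment of the squared error, in extended nonnegative reals. -/
noncomputable def thE (N : ℕ) (γ : ℕ → ℝ) (α : ℝ) {d : ℕ} (z : Fin d → ℤ) (y : ℤ) : ℝ≥0∞ :=
  ∑' h : Fin d → ℤ, ∑' k : ℤ, if k ≠ 0 ∧ (N : ℤ) ∣ (∑ j, h j * z j) + k * y then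
    ENNReal.ofReal (rprod γ α h) * (ENNReal.ofReal (γ (d + 1)) * pwE α k) else 0

/-- The squared error, in extended nonnegative reals. -/
noncomputable def e2E (N : ℕ) (γ : ℕ → ℝ) (α : ℝ) {d : ℕ} (z : Fin d → ℤ) : ℝ≥0∞ :=
  ∑' h : Fin d → ℤ, if h ≠ 0 ∧ (N : ℤ) ∣ ∑ j, h j * z j then
    ENNReal.ofReal (rprod γ α h) else 0

lemma rpow_tsum_le {ι : Type*} (f : ι → ℝ≥0∞) {p : ℝ} (h0 : 0 < p) (h1 : p ≤ 1) :
    (∑' i, f i) ^ p ≤ ∑' i, f i ^ p := by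
  classical
  have hfin : ∀ s : Finset ι, (∑ i ∈ s, f i) ^ p ≤ ∑ i ∈ s, f i ^ p := by
    intro s
    induction s using Finset.induction_on with
    | empty => simp [h0]
    | insert a s ha ih =>
      rw [Finset.sum_insert ha, Finset.sum_insert ha]
      exact (ENNReal.rpow_add_le_add_rpow _ _ h0.le h1).trans (by gcongr)
  have : (∑' i, f i) ≤ (∑' i, f i ^ p) ^ (1 / p) := by
    rw [ENNReal.tsum_eq_iSup_sum]
    refine iSup_le fun s => ?_
    rw [one_div, ENNReal.le_rpow_inv_iff h0]
    exact (hfin s).trans (ENNReal.sum_le_tsum s)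
  rwa [one_div, ENNReal.le_rpow_inv_iff h0] at this

lemma pwE_rpow (α p : ℝ) (hp : 0 < p) (k : ℤ) : pwE α k ^ p = pwE (α * p) k := by
  unfold pwE
  split_ifs with h
  · simp [hp]
  · rw [ENNReal.ofReal_rpow_of_nonneg (by positivity) hp.le, ← Real.rpow_mul (abs_nonneg _)]
    ring_nf

lemma rprod_nonneg {γ : ℕ → ℝ} (hγ : ∀ j, 0 < γ j) (α : ℝ) {d : ℕ} (h : Fin d → ℤ) :
    0 ≤ rprod γ α h := by
  unfold rprod
  refine Finset.prod_nonneg fun j _ => ?_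
  have := hγ (j.1 + 1)
  split_ifs <;> positivity

lemma rprod_rpow {γ : ℕ → ℝ} (hγ : ∀ j, 0 < γ j) (α p : ℝ) {d : ℕ}
    (h : Fin d → ℤ) : rprod γ α h ^ p = rprod (fun j => γ j ^ p) (α * p) h := by
  unfold rprod
  rw [← Real.finsetProd_rpow]
  · refine Finset.prod_congr rfl fun j _ => ?_
    have := hγ (j.1 + 1)
    split_ifs
    · simp
    · rw [Real.mul_rpow this.le (by positivity), ← Real.rpow_mul (abs_nonneg _)]
      ring_nf
  · intro j _
    have := hγ (j.1 + 1)
    split_ifs <;> positivity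

lemma thE_rpow_le (N : ℕ) {γ : ℕ → ℝ} (hγ : ∀ j, 0 < γ j) (α p : ℝ) (h0 : 0 < p) (h1 : p ≤ 1)
    {d : ℕ} (z : Fin d → ℤ) (y : ℤ) :
    thE N γ α z y ^ p ≤ thE N (fun j => γ j ^ p) (α * p) z y := by
  unfold thE
  refine (rpow_tsum_le _ h0 h1).trans (ENNReal.tsum_le_tsum fun h => ?_)
  refine (rpow_tsum_le _ h0 h1).trans (ENNReal.tsum_le_tsum fun k => ?_)
  split_ifs
  · rw [ENNReal.mul_rpow_of_nonneg _ _ h0.le, ENNReal.mul_rpow_of_nonneg _ _ h0.le,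
      pwE_rpow _ _ h0, ENNReal.ofReal_rpow_of_nonneg (rprod_nonneg hγ _ _) h0.le,
      rprod_rpow hγ, ENNReal.ofReal_rpow_of_nonneg (hγ _).le h0.le]
  · simp [h0]

lemma rprod_snoc (γ : ℕ → ℝ) (α : ℝ) {d : ℕ} (h : Fin d → ℤ) (k : ℤ) :
    rprod γ α (Fin.snoc (α := fun _ => ℤ) h k : Fin (d + 1) → ℤ) =
      rprod γ α h * (if k = 0 then 1 else γ (d + 1) * |(k : ℝ)| ^ (-α)) := by
  simp [rprod, Fin.prod_univ_castSucc]

lemma tsum_snoc {d : ℕ} (F : (Fin (d + 1) → ℤ) → ℝ≥0∞) :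
    ∑' h, F h = ∑' (h : Fin d → ℤ) (k : ℤ), F (Fin.snoc (α := fun _ => ℤ) h k) := by
  rw [← (Fin.snocEquiv (fun _ : Fin (d + 1) => ℤ)).tsum_eq, ENNReal.tsum_prod', ENNReal.tsum_comm]
  rfl

lemma e2E_snoc (N : ℕ) {γ : ℕ → ℝ} (hγ : ∀ j, 0 < γ j) (α : ℝ) {d : ℕ} (z : Fin d → ℤ) (y : ℤ) :
    e2E N γ α (Fin.snoc (α := fun _ => ℤ) z y : Fin (d + 1) → ℤ) = e2E N γ α z + thE N γ α z y := by
  unfold e2E thE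
  rw [tsum_snoc, ← ENNReal.tsum_add]
  refine tsum_congr fun h => ?_
  rw [ENNReal.tsum_eq_add_tsum_ite 0]
  congr 1
  · have : (Fin.snoc (α := fun _ => ℤ) h 0 : Fin (d + 1) → ℤ) = 0 ↔ h = 0 := by
      constructor
      · intro e
        ext i
        have := congrFun e i.castSucc
        simpa using this
      · rintro rfl
        ext i
        refine Fin.lastCases ?_ (fun i => ?_) i <;> simp
    simp [rprod_snoc, Fin.sum_univ_castSucc, this]
  · refine tsum_congr fun k => ?_
    by_cases hk : k = 0
    · simp [hk]
    · have : (Fin.snoc (α := fun _ => ℤ) h k : Fin (d + 1) → ℤ) ≠ 0 := by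
        intro e
        have := congrFun e (Fin.last d)
        simp at this
        exact hk this
      simp [rprod_snoc, Fin.sum_univ_castSucc, this, hk, pwE,
        ENNReal.ofReal_mul (rprod_nonneg hγ α h), ENNReal.ofReal_mul (hγ (d + 1)).le]

lemma tsum_rprod (γ : ℕ → ℝ) (hγ : ∀ j, 0 < γ j) (α : ℝ) (d : ℕ) :
    ∑' h : Fin d → ℤ, ENNReal.ofReal (rprod γ α h) =
      ∏ j ∈ Finset.Icc 1 d, (1 + ENNReal.ofReal (γ j) * ∑' k, pwE α k) := by
  induction d with
  | zero => simp [rprod]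
  | succ d ih =>
    rw [tsum_snoc, Finset.prod_Icc_succ_top (by omega), ← ih, ← ENNReal.tsum_mul_right]
    refine tsum_congr fun h => ?_
    rw [ENNReal.tsum_eq_add_tsum_ite 0, mul_add, ← ENNReal.tsum_mul_left, ← ENNReal.tsum_mul_left]
    congr 1
    · simp [rprod_snoc]
    · refine tsum_congr fun k => ?_
      by_cases hk : k = 0
      · simp [hk, pwE]
      · simp [rprod_snoc, hk, pwE,
          ENNReal.ofReal_mul (rprod_nonneg hγ α h), ENNReal.ofReal_mul (hγ (d + 1)).le]

lemma tsum_pwE {x : ℝ} (hx : 1 < x) : ∑' k, pwE x k = 2 * ENNReal.ofReal (zeta x) := by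
  have hs : Summable fun n : ℕ => ((n : ℝ) + 1) ^ (-x) := by
    have := (summable_nat_add_iff (f := fun n : ℕ => (n : ℝ) ^ (-x)) 1).2
      (Real.summable_nat_rpow.2 (by linarith))
    simpa using this
  rw [tsum_of_add_one_of_neg_add_one ENNReal.summable ENNReal.summable]
  unfold zeta
  rw [ENNReal.ofReal_tsum_of_nonneg (fun n => by positivity) hs, two_mul]
  have h1 : ∀ n : ℕ, pwE x ((n : ℤ) + 1) = ENNReal.ofReal (((n : ℝ) + 1) ^ (-x)) := by
    intro n
    have h : (n : ℤ) + 1 ≠ 0 := by omega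
    have h' : |(n : ℝ) + 1| = n + 1 := abs_of_pos (by positivity)
    simp [pwE, h, h']
  have h2 : ∀ n : ℕ, pwE x (-((n : ℤ) + 1)) = ENNReal.ofReal (((n : ℝ) + 1) ^ (-x)) := by
    intro n
    rw [← h1 n]
    simp only [pwE, neg_eq_zero, Int.cast_neg, abs_neg]
  have h3 : pwE x 0 = 0 := by simp [pwE]
  simp only [h1, h2, h3, add_zero]

lemma zeta_nonneg (x : ℝ) : 0 ≤ zeta x := tsum_nonneg fun n => by positivity

lemma e2_eq (N : ℕ) {γ : ℕ → ℝ} (hγ : ∀ j, 0 < γ j) (α : ℝ) {d : ℕ} (z : Fin d → ℤ) :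
    e2 N γ α z = (e2E N γ α z).toReal := by
  unfold e2 e2E
  rw [ENNReal.tsum_toReal_eq]
  · refine tsum_congr fun h => ?_
    split_ifs
    · rw [ENNReal.toReal_ofReal (rprod_nonneg hγ _ _)]
    · simp
  · intro h
    split_ifs <;> simp

lemma e2E_ne_top (N : ℕ) {γ : ℕ → ℝ} (hγ : ∀ j, 0 < γ j) {α : ℝ} (hα : 1 < α) {d : ℕ}
    (z : Fin d → ℤ) : e2E N γ α z ≠ ∞ := by
  have : e2E N γ α z ≤ ∑' h : Fin d → ℤ, ENNReal.ofReal (rprod γ α h) := by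
    refine ENNReal.tsum_le_tsum fun h => ?_
    split_ifs <;> simp
  refine ne_top_of_le_ne_top ?_ this
  rw [tsum_rprod γ hγ, tsum_pwE hα]
  refine ENNReal.prod_ne_top fun j _ => ?_
  finiteness

lemma count_le (M : ℕ) (hM : 0 < M) (S : Finset ℕ) (hS : ∀ z ∈ S, z < M ∧ Nat.Coprime z M)
    (c k : ℤ) : (S.filter fun z : ℕ => (M : ℤ) ∣ c + k * z).card ≤
      if ((Int.gcd c M : ℕ) : ℤ) ∣ k then Int.gcd c M else 0 := by
  rcases (S.filter fun z : ℕ => (M : ℤ) ∣ c + k * z).eq_empty_or_nonempty with h | ⟨z0, hz0⟩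
  · simp [h]
  rw [Finset.mem_filter] at hz0
  obtain ⟨hz0S, hz0⟩ := hz0
  obtain ⟨hz0M, hcop⟩ := hS z0 hz0S
  have hg : Int.gcd c M = Int.gcd k M := by
    have e1 : Int.gcd c M = Int.gcd (k * z0) M := by
      apply Nat.dvd_antisymm
      · apply Int.dvd_gcd_iff.2 ⟨?_, Int.gcd_dvd_right ..⟩
        have := dvd_trans (Int.gcd_dvd_right c M) hz0
        exact (dvd_add_right (Int.gcd_dvd_left ..)).1 this
      · apply Int.dvd_gcd_iff.2 ⟨?_, Int.gcd_dvd_right ..⟩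
        have := dvd_trans (Int.gcd_dvd_right (k * z0) M) hz0
        exact (dvd_add_left (Int.gcd_dvd_left ..)).1 this
    rw [e1]
    simp only [Int.gcd, Int.natAbs_mul, Int.natAbs_natCast]
    exact Nat.Coprime.gcd_mul_right_cancel _ hcop
  rw [hg]
  rw [if_pos (Int.gcd_dvd_left ..)]
  set g := Int.gcd k M with hgd
  have hgM : g ∣ M := by exact_mod_cast Int.gcd_dvd_right k (M : ℤ)
  have hgpos : 0 < g := Nat.pos_of_dvd_of_pos hgM hM
  obtain ⟨q, hq⟩ := hgM
  have hqpos : 0 < q := by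
    rcases Nat.eq_zero_or_pos q with h | h
    · simp [h] at hq; omega
    · exact h
  have key : ∀ z ∈ S.filter (fun z : ℕ => (M : ℤ) ∣ c + k * z), z % q = z0 % q := by
    intro z hz
    rw [Finset.mem_filter] at hz
    have h1 : (M : ℤ) ∣ k * ((z : ℤ) - z0) := by
      have := dvd_sub hz.2 hz0
      rwa [show k * ((z : ℤ) - z0) = c + k * z - (c + k * z0) by ring]
    obtain ⟨k', hk'⟩ : (g : ℤ) ∣ k := Int.gcd_dvd_left ..
    have hcop' : IsCoprime (q : ℤ) k' := by
      rw [Int.isCoprime_iff_gcd_eq_one]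
      have : Int.gcd k M = g * Int.gcd k' q := by
        rw [hk', hq]; push_cast; rw [Int.gcd_mul_left]; simp
      rw [Int.gcd_comm]
      have h2 : g * Int.gcd k' q = g * 1 := by rw [← this, mul_one]
      exact Nat.eq_of_mul_eq_mul_left hgpos h2
    have h3 : (q : ℤ) ∣ k' * ((z : ℤ) - z0) := by
      rw [hq, hk', mul_assoc] at h1
      push_cast at h1
      exact Int.dvd_of_mul_dvd_mul_left (by exact_mod_cast hgpos.ne') h1
    have h4 := hcop'.dvd_of_dvd_mul_left h3
    exact ((Nat.modEq_iff_dvd).2 h4).symm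
  calc _ ≤ (Finset.range g).card := by
        refine Finset.card_le_card_of_injOn (fun z => z / q) ?_ ?_
        · intro z hz
          have hz' := (hS z (Finset.mem_filter.1 hz).1).1
          simp only [Finset.coe_range, Set.mem_Iio]
          rw [Nat.div_lt_iff_lt_mul hqpos, ← hq]
          exact hz'
        · intro a ha b hb hab
          have h1 := key a ha
          have h2 := key b hb
          simp only at hab
          rw [← Nat.div_add_mod a q, ← Nat.div_add_mod b q, hab, h1, h2]
    _ = g := by simp

lemma key_sum (M : ℕ) (hM : 0 < M) (S : Finset ℕ) (hS : ∀ z ∈ S, z < M ∧ Nat.Coprime z M)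
    {x : ℝ} (hx : 1 < x) (c : ℤ) :
    ∑ z ∈ S, ∑' k : ℤ, (if k ≠ 0 ∧ (M : ℤ) ∣ c + k * z then pwE x k else 0) ≤ ∑' k, pwE x k := by
  have hgpos : 0 < Int.gcd c M := Int.gcd_pos_of_ne_zero_right _ (by exact_mod_cast hM.ne')
  have hcount := count_le M hM S hS c
  generalize Int.gcd c M = g at *
  rw [← Summable.tsum_finsetSum (fun _ _ => ENNReal.summable)]
  calc _ ≤ ∑' k : ℤ, (if (g : ℤ) ∣ k then (g : ℝ≥0∞) * pwE x k else 0) := by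
        refine ENNReal.tsum_le_tsum fun k => ?_
        by_cases hk : k = 0
        · simp [hk]
        · simp only [ne_eq, hk, not_false_eq_true, true_and]
          rw [← Finset.sum_filter, Finset.sum_const, nsmul_eq_mul]
          have := hcount k
          split_ifs at this ⊢ with h
          · gcongr
          · simp at this
            simp [Finset.filter_eq_empty_iff.2 this]
    _ = ∑' j : ℤ, (g : ℝ≥0∞) * pwE x (g * j) := by
        have hinj : Function.Injective (fun j : ℤ => (g : ℤ) * j) :=
          mul_right_injective₀ (by exact_mod_cast hgpos.ne')
        rw [← hinj.tsum_eq]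
        · refine tsum_congr fun j => ?_
          simp
        · intro k hk
          simp only [Function.mem_support] at hk
          by_cases h : (g : ℤ) ∣ k
          · obtain ⟨j, rfl⟩ := h
            exact ⟨j, rfl⟩
          · simp [h] at hk
    _ ≤ _ := by
        refine ENNReal.tsum_le_tsum fun j => ?_
        unfold pwE
        by_cases hj : j = 0
        · simp [hj]
        · have hg0 : (g : ℤ) * j ≠ 0 := mul_ne_zero (by exact_mod_cast hgpos.ne') hj
          simp only [hj, hg0, if_false]
          rw [← ENNReal.ofReal_natCast, ← ENNReal.ofReal_mul (by positivity)]
          apply ENNReal.ofReal_le_ofReal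
          push_cast
          rw [abs_mul, Real.mul_rpow (abs_nonneg _) (abs_nonneg _), ← mul_assoc]
          have hg1 : (1 : ℝ) ≤ g := by exact_mod_cast hgpos
          have : (g : ℝ) * |(g : ℝ)| ^ (-x) ≤ 1 := by
            rw [abs_of_pos (by positivity)]
            calc (g : ℝ) * (g : ℝ) ^ (-x) = (g : ℝ) ^ (1 + -x) := by
                  rw [Real.rpow_add (by positivity), Real.rpow_one]
              _ ≤ 1 := Real.rpow_le_one_of_one_le_of_nonpos hg1 (by linarith)
          exact mul_le_of_le_one_left (by positivity) this

lemma thE_le (N : ℕ) (γ : ℕ → ℝ) (x : ℝ) {d : ℕ} (z : Fin d → ℤ) (y : ℤ) :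
    thE N γ x z y ≤ (∑' h : Fin d → ℤ, ENNReal.ofReal (rprod γ x h)) *
      (ENNReal.ofReal (γ (d + 1)) * ∑' k, pwE x k) := by
  unfold thE
  rw [← ENNReal.tsum_mul_right]
  refine ENNReal.tsum_le_tsum fun h => ?_
  rw [← ENNReal.tsum_mul_left, ← ENNReal.tsum_mul_left]
  refine ENNReal.tsum_le_tsum fun k => ?_
  split_ifs <;> simp

lemma Zred_spec {b m w : ℕ} (hw : w < m) :
    ∀ z ∈ Zred b m w, z < b ^ (m - w) ∧ Nat.Coprime z (b ^ (m - w)) := by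
  intro z hz
  rw [Zred, if_pos hw, Finset.mem_filter, Finset.mem_Ico] at hz
  refine ⟨hz.1.2, ?_⟩
  exact Nat.Coprime.coprime_dvd_right (pow_dvd_pow b (Nat.sub_le m w)) hz.2

lemma Zred_card {b m w : ℕ} (hb : b.Prime) :
    (Zred b m w).card = Nat.totient (b ^ (m - w)) := by
  unfold Zred
  split_ifs with hw
  · rw [Nat.totient_eq_card_coprime]
    congr 1
    have h2 : 1 < b ^ (m - w) := Nat.one_lt_pow (by omega) hb.one_lt
    ext z
    simp only [Finset.mem_filter, Finset.mem_Ico, Finset.mem_range]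
    have hc : Nat.gcd z (b ^ m) = 1 ↔ (b ^ (m - w)).Coprime z := by
      change Nat.Coprime z (b ^ m) ↔ _
      rw [Nat.coprime_comm (n := b ^ (m - w)), Nat.coprime_pow_right_iff (by omega),
        Nat.coprime_pow_right_iff (by omega)]
    rw [hc]
    constructor
    · rintro ⟨⟨_, h⟩, h'⟩
      exact ⟨h, h'⟩
    · rintro ⟨h, h'⟩
      refine ⟨⟨?_, h⟩, h'⟩
      rcases Nat.eq_zero_or_pos z with rfl | h
      · rw [Nat.coprime_zero_right] at h'
        omega
      · exact h
  · have : m - w = 0 := by omega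
    simp [this]

lemma sum_thE_le {b m w : ℕ} (hb : b.Prime) (γ : ℕ → ℝ) {x : ℝ} (hx : 1 < x)
    {d : ℕ} (z : Fin d → ℤ) (S : Finset ℕ) (hS : S ⊆ Zred b m w) :
    ∑ z' ∈ S, thE (b ^ m) γ x z ((b : ℤ) ^ w * (z' : ℤ)) ≤
      (∑' h : Fin d → ℤ, ENNReal.ofReal (rprod γ x h)) *
      (ENNReal.ofReal (γ (d + 1)) * ∑' k, pwE x k) := by
  by_cases hw : w < m
  · have hspec := fun z hz => Zred_spec hw z (hS hz)
    unfold thE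
    rw [← Summable.tsum_finsetSum (fun _ _ => ENNReal.summable), ← ENNReal.tsum_mul_right]
    refine ENNReal.tsum_le_tsum fun h => ?_
    have hb0 : (b : ℤ) ^ w ≠ 0 := pow_ne_zero _ (by exact_mod_cast hb.ne_zero)
    have hpow : ((b ^ m : ℕ) : ℤ) = (b : ℤ) ^ w * ((b ^ (m - w) : ℕ) : ℤ) := by
      push_cast
      rw [← pow_add]; congr 1; omega
    by_cases hc : (b : ℤ) ^ w ∣ ∑ j, h j * z j
    · obtain ⟨c, hc⟩ := hc
      have e : ∀ (z' : ℕ) (k : ℤ), ((b ^ m : ℕ) : ℤ) ∣ (∑ j, h j * z j) + k * ((b : ℤ) ^ w * z') ↔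
          ((b ^ (m - w) : ℕ) : ℤ) ∣ c + k * z' := by
        intro z' k
        rw [hc, hpow, show (b : ℤ) ^ w * c + k * ((b : ℤ) ^ w * z') =
          (b : ℤ) ^ w * (c + k * z') by ring]
        exact mul_dvd_mul_iff_left hb0
      simp only [e]
      have := key_sum (b ^ (m - w)) (pow_pos hb.pos _) S hspec hx c
      rw [← mul_assoc]
      refine le_trans (le_of_eq ?_) (mul_le_mul_right this _)
      rw [Finset.mul_sum]
      refine Finset.sum_congr rfl fun z' _ => ?_
      rw [← ENNReal.tsum_mul_left]
      refine tsum_congr fun k => ?_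
      rw [mul_ite, mul_zero, mul_assoc]
    · have e : ∀ (z' : ℕ) (k : ℤ), ¬ ((b ^ m : ℕ) : ℤ) ∣
          (∑ j, h j * z j) + k * ((b : ℤ) ^ w * z') := by
        intro z' k hd
        apply hc
        rw [hpow] at hd
        have h1 := dvd_trans (Dvd.intro _ rfl) hd
        exact (dvd_add_left ⟨k * z', by ring⟩).1 h1
      simp only [e, and_false, if_false, tsum_zero, Finset.sum_const_zero]
      exact zero_le
  · rw [Zred, if_neg hw] at hS
    refine (Finset.sum_le_sum_of_subset hS).trans ?_
    rw [Finset.sum_singleton]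
    exact thE_le ..

lemma step_real {b m w : ℕ} (hb : b.Prime) {γ : ℕ → ℝ} (hγ : ∀ j, 0 < γ j) {α p : ℝ}
    (hα : 1 < α) (h0 : 0 < p) (h1 : p ≤ 1) (hx : 1 < α * p)
    {d : ℕ} (z : Fin d → ℤ) (y : ℤ) (S : Finset ℕ) (hS : S ⊆ Zred b m w) (hne : S.Nonempty)
    (hmin : ∀ z' ∈ S, e2 (b ^ m) γ α (Fin.snoc (α := fun _ => ℤ) z y : Fin (d + 1) → ℤ) ≤
      e2 (b ^ m) γ α (Fin.snoc (α := fun _ => ℤ) z ((b : ℤ) ^ w * (z' : ℤ)) : Fin (d + 1) → ℤ)) :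
    e2 (b ^ m) γ α (Fin.snoc (α := fun _ => ℤ) z y : Fin (d + 1) → ℤ) ^ p ≤
      e2 (b ^ m) γ α z ^ p +
        ((∏ j ∈ Finset.Icc 1 d, (1 + γ j ^ p * (2 * zeta (α * p)))) *
          (γ (d + 1) ^ p * (2 * zeta (α * p)))) / S.card := by
  have hth : ∀ z' ∈ S, thE (b ^ m) γ α z y ≤ thE (b ^ m) γ α z ((b : ℤ) ^ w * (z' : ℤ)) := by
    intro z' hz'
    have := hmin z' hz'
    rw [e2_eq _ hγ, e2_eq _ hγ, ENNReal.toReal_le_toReal (e2E_ne_top _ hγ hα _)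
      (e2E_ne_top _ hγ hα _), e2E_snoc _ hγ, e2E_snoc _ hγ] at this
    exact (ENNReal.add_le_add_iff_left (e2E_ne_top _ hγ hα _)).1 this
  have hγp : ∀ j, 0 < γ j ^ p := fun j => Real.rpow_pos_of_pos (hγ j) p
  have hz0 := zeta_nonneg (α * p)
  set A : ℝ := (∏ j ∈ Finset.Icc 1 d, (1 + γ j ^ p * (2 * zeta (α * p)))) *
          (γ (d + 1) ^ p * (2 * zeta (α * p))) with hA
  have hA0 : 0 ≤ A := by
    refine mul_nonneg (Finset.prod_nonneg fun j _ => ?_) ?_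
    · have := hγp j; positivity
    · have := hγp (d + 1); positivity
  have hAE : (∑' h : Fin d → ℤ, ENNReal.ofReal (rprod (fun j => γ j ^ p) (α * p) h)) *
      (ENNReal.ofReal (γ (d + 1) ^ p) * ∑' k, pwE (α * p) k) = ENNReal.ofReal A := by
    have hP0 : 0 ≤ ∏ j ∈ Finset.Icc 1 d, (1 + γ j ^ p * (2 * zeta (α * p))) := by
      refine Finset.prod_nonneg fun j _ => ?_
      have := hγp j; positivity
    have h2 : (2 : ℝ≥0∞) = ENNReal.ofReal 2 := by simp
    rw [tsum_rprod _ hγp, tsum_pwE hx, h2, ← ENNReal.ofReal_mul zero_le_two, hA,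
      ENNReal.ofReal_mul hP0, ENNReal.ofReal_mul (hγp _).le, ENNReal.ofReal_prod_of_nonneg]
    · congr 1
      refine Finset.prod_congr rfl fun j _ => ?_
      rw [ENNReal.ofReal_add zero_le_one (by have := hγp j; positivity), ENNReal.ofReal_one,
        ENNReal.ofReal_mul (hγp _).le]
    · intro j _
      have := hγp j; positivity
  have hmain : (S.card : ℝ≥0∞) * thE (b ^ m) γ α z y ^ p ≤ ENNReal.ofReal A := by
    rw [← hAE]
    refine le_trans ?_ (sum_thE_le hb _ hx z S hS)
    rw [← nsmul_eq_mul, ← Finset.sum_const]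
    refine Finset.sum_le_sum fun z' hz' => ?_
    exact (ENNReal.rpow_le_rpow (hth z' hz') h0.le).trans (thE_rpow_le _ hγ _ _ h0 h1 _ _)
  have hcard : (0 : ℝ) < S.card := by exact_mod_cast hne.card_pos
  have htot : e2E (b ^ m) γ α (Fin.snoc (α := fun _ => ℤ) z y : Fin (d + 1) → ℤ) ^ p ≤
      e2E (b ^ m) γ α z ^ p + ENNReal.ofReal (A / S.card) := by
    rw [e2E_snoc _ hγ]
    refine (ENNReal.rpow_add_le_add_rpow _ _ h0.le h1).trans ?_
    gcongr
    rw [ENNReal.ofReal_div_of_pos hcard, ENNReal.ofReal_natCast]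
    rw [ENNReal.le_div_iff_mul_le (Or.inl (by exact_mod_cast hcard.ne')) (Or.inl (by simp)),
      mul_comm]
    exact hmain
  rw [e2_eq _ hγ, e2_eq _ hγ, ENNReal.toReal_rpow, ENNReal.toReal_rpow]
  have hfin : e2E (b ^ m) γ α z ^ p ≠ ∞ := ENNReal.rpow_ne_top_of_nonneg h0.le (e2E_ne_top _ hγ hα _)
  have := ENNReal.toReal_mono (by finiteness) htot
  rwa [ENNReal.toReal_add hfin (by simp), ENNReal.toReal_ofReal (by positivity)] at this

lemma e2_nonneg (N : ℕ) {γ : ℕ → ℝ} (hγ : ∀ j, 0 < γ j) (α : ℝ) {d : ℕ} (z : Fin d → ℤ) :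
    0 ≤ e2 N γ α z := by
  rw [e2_eq _ hγ]; exact ENNReal.toReal_nonneg

/-- Main theorem (Theorem 2): the worst-case error of the generating vector produced by the
reduced projection-corrected CBC algorithm satisfies, for all `1 ≤ d ≤ s` and
`λ ∈ (1/α, 1]`,
`e²(z̃₁,…,z̃_d) ≤ (Σ_{u ⊆ [d]} γ_u^λ (4ζ(αλ))^{|u|} / φ(b^{max{0,m-max_{j∈u}w_j}})
  ∏_{j∈u} |Z_{N,w_j}|/(|Z_{N,w_j}|-|E_j|))^{1/λ}`. -/
theorem reduced_projection_corrected_cbc_bound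
    (α : ℝ) (hα : 1 < α) (b : ℕ) (hb : b.Prime) (m : ℕ) (hm : 1 ≤ m)
    (N : ℕ) (hN : N = b ^ m) (s : ℕ) (hs : 1 ≤ s)
    (γ : ℕ → ℝ) (hγ : ∀ j, 0 < γ j)
    (w : ℕ → ℕ) (hw1 : w 1 = 0) (hwmono : ∀ i j, i ≤ j → w i ≤ w j)
    (E : ℕ → Finset ℕ) (hE : ∀ j, E j ⊂ Zred b m (w j))
    (t₂ : ℕ) (ht₂ : m ≤ w t₂) (ht₂min : ∀ j < t₂, w j < m)
    (zt : ℕ → ℤ) (hz1 : zt 1 = 1)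
    -- projection-corrected selection of components `2,…,min{t₂-1,s}`:
    (hsel : ∀ d, 1 ≤ d → d + 1 ≤ s → d + 1 < t₂ →
      ∃ z ∈ Zred b m (w (d + 1)) \ E (d + 1),
        zt (d + 1) = (b : ℤ) ^ (w (d + 1)) * (z : ℤ) ∧
        ∀ z' ∈ Zred b m (w (d + 1)) \ E (d + 1),
          e2 N γ α (Fin.snoc (fun j : Fin d => zt (j.1 + 1)) (zt (d + 1))) ≤
            e2 N γ α (Fin.snoc (fun j : Fin d => zt (j.1 + 1))
              ((b : ℤ) ^ (w (d + 1)) * (z' : ℤ))))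
    -- components with index `≥ t₂` are set to `0`:
    (hzero : ∀ j, t₂ ≤ j → j ≤ s → zt j = 0) :
    ∀ d, 1 ≤ d → d ≤ s → ∀ lam : ℝ, 1 / α < lam → lam ≤ 1 →
      e2 N γ α (fun j : Fin d => zt (j.1 + 1)) ≤
        (∑ u ∈ (Finset.Icc 1 d).powerset,
            (∏ j ∈ u, γ j) ^ lam * (4 * zeta (α * lam)) ^ u.card /
                (Nat.totient (b ^ (m - u.sup w)) : ℝ) *
              ∏ j ∈ u, ((Zred b m (w j)).card : ℝ) /
                ((Zred b m (w j)).card - ((E j).card : ℝ))) ^ (1 / lam) := by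
  subst hN
  have hZE : ∀ j, ((Zred b m (w j)).card : ℝ) - ((E j).card : ℝ) =
      ((Zred b m (w j) \ E j).card : ℝ) := by
    intro j
    rw [Finset.card_sdiff_of_subset (hE j).1, Nat.cast_sub (Finset.card_le_card (hE j).1)]
  have hSne : ∀ j, (Zred b m (w j) \ E j).Nonempty := fun j =>
    Finset.sdiff_nonempty.2 (hE j).2
  have hSpos : ∀ j, (0 : ℝ) < ((Zred b m (w j) \ E j).card : ℝ) := fun j => by
    exact_mod_cast (hSne j).card_pos
  have hratio : ∀ j, 1 ≤ ((Zred b m (w j)).card : ℝ) /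
                ((Zred b m (w j)).card - ((E j).card : ℝ)) := by
    intro j
    rw [hZE, one_le_div (hSpos j)]
    exact_mod_cast Finset.card_le_card Finset.sdiff_subset
  have hfun : ∀ d, (fun j : Fin (d + 1) => zt (j.1 + 1)) =
      (Fin.snoc (α := fun _ => ℤ) (fun j : Fin d => zt (j.1 + 1)) (zt (d + 1)) :
        Fin (d + 1) → ℤ) := by
    intro d
    ext i
    refine Fin.lastCases ?_ (fun i => ?_) i <;> simp
  have hmin : ∀ d, d + 1 ≤ s → ∀ z' ∈ Zred b m (w (d + 1)) \ E (d + 1),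
      e2 (b ^ m) γ α (Fin.snoc (α := fun _ => ℤ) (fun j : Fin d => zt (j.1 + 1)) (zt (d + 1)) :
        Fin (d + 1) → ℤ) ≤
      e2 (b ^ m) γ α (Fin.snoc (α := fun _ => ℤ) (fun j : Fin d => zt (j.1 + 1))
        ((b : ℤ) ^ (w (d + 1)) * (z' : ℤ)) : Fin (d + 1) → ℤ) := by
    intro d hd z' hz'
    rcases Nat.eq_zero_or_pos d with rfl | hdpos
    · refine le_of_eq ?_
      unfold e2
      refine tsum_congr fun h => ?_
      have hcop : IsCoprime ((b ^ m : ℕ) : ℤ) (z' : ℤ) := by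
        have h1 := (Zred_spec (by rw [zero_add, hw1]; omega) z' (Finset.mem_sdiff.1 hz').1).2
        rw [hw1] at h1
        rw [Nat.isCoprime_iff_coprime]
        exact h1.symm
      have : ((b ^ m : ℕ) : ℤ) ∣ h 0 ↔ ((b ^ m : ℕ) : ℤ) ∣ h 0 * z' :=
        ⟨fun h => Dvd.dvd.mul_right h _, fun h => hcop.dvd_of_dvd_mul_right h⟩
      simp only [Nat.cast_pow] at this
      simp [hz1, hw1, Fin.snoc, this]
    · by_cases ht : d + 1 < t₂
      · obtain ⟨z, _, _, h⟩ := hsel d hdpos hd ht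
        exact h z' hz'
      · refine le_of_eq ?_
        have hwm : m ≤ w (d + 1) := ht₂.trans (hwmono _ _ (by omega))
        unfold e2
        refine tsum_congr fun h => ?_
        rw [hzero (d + 1) (by omega) hd]
        have hdv : ((b ^ m : ℕ) : ℤ) ∣ h (Fin.last d) * ((b : ℤ) ^ (w (d + 1)) * (z' : ℤ)) := by
          refine Dvd.dvd.mul_left (Dvd.dvd.mul_right ?_ _) _
          push_cast
          exact pow_dvd_pow _ hwm
        have := fun a : ℤ => dvd_add_left (b := a) hdv
        simp only [Fin.sum_univ_castSucc, Fin.snoc_castSucc, Fin.snoc_last, this, mul_zero,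
          add_zero]
  intro d _ hds lam hl hl1
  have hα0 : 0 < α := by linarith
  have hl0 : 0 < lam := lt_trans (by positivity) hl
  have hx : 1 < α * lam := by
    rw [div_lt_iff₀ hα0] at hl; linarith
  have hz0 := zeta_nonneg (α * lam)
  set T : Finset ℕ → ℝ := fun u => (∏ j ∈ u, γ j) ^ lam * (4 * zeta (α * lam)) ^ u.card /
                (Nat.totient (b ^ (m - u.sup w)) : ℝ) *
              ∏ j ∈ u, ((Zred b m (w j)).card : ℝ) /
                ((Zred b m (w j)).card - ((E j).card : ℝ)) with hT
  have hT0 : ∀ u, 0 ≤ T u := by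
    intro u
    refine mul_nonneg (div_nonneg (mul_nonneg (Real.rpow_nonneg
      (Finset.prod_nonneg fun j _ => (hγ j).le) _) (by positivity)) (by positivity))
      (Finset.prod_nonneg fun j _ => zero_le_one.trans (hratio j))
  have hind : ∀ d, d ≤ s → e2 (b ^ m) γ α (fun j : Fin d => zt (j.1 + 1)) ^ lam ≤
      ∑ u ∈ (Finset.Icc 1 d).powerset, T u := by
    intro d
    induction d with
    | zero =>
      intro _
      have : e2 (b ^ m) γ α (fun j : Fin 0 => zt (j.1 + 1)) = 0 := by
        unfold e2
        refine (tsum_congr fun h => if_neg fun hh => hh.1 (Subsingleton.elim _ _)).trans tsum_zero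
      rw [this, Real.zero_rpow hl0.ne']
      exact Finset.sum_nonneg fun u _ => hT0 u
    | succ d ih =>
      intro hd
      rw [hfun d]
      refine (step_real hb hγ hα hl0 hl1 hx _ _ _ Finset.sdiff_subset (hSne (d + 1))
        (hmin d hd)).trans ?_
      rw [← Finset.insert_Icc_right_eq_Icc_add_one (by omega), Finset.sum_powerset_insert (by simp)]
      refine add_le_add (ih (by omega)) ?_
      rw [Finset.prod_one_add, Finset.sum_mul, Finset.sum_div]
      refine Finset.sum_le_sum fun v hv => ?_
      rw [Finset.mem_powerset] at hv
      have hnot : d + 1 ∉ v := fun h => by simpa using hv h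
      have hsup : (insert (d + 1) v).sup w = w (d + 1) := by
        rw [Finset.sup_insert]
        refine max_eq_left (Finset.sup_le fun j hj => hwmono _ _ ?_)
        have := Finset.mem_Icc.1 (hv hj)
        omega
      have hφ : (0 : ℝ) < (Zred b m (w (d + 1))).card := by
        exact_mod_cast Finset.card_pos.2 ((hSne (d + 1)).mono Finset.sdiff_subset)
      simp only [hT]
      rw [hsup, ← Zred_card hb, Finset.prod_insert hnot, Finset.prod_insert hnot,
        Finset.card_insert_of_notMem hnot, Real.mul_rpow (hγ _).le
        (Finset.prod_nonneg fun j _ => (hγ j).le), ← Real.finsetProd_rpow _ _ (fun j _ => (hγ j).le),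
        hZE (d + 1), Finset.prod_mul_distrib, Finset.prod_const]
      have hP : 1 ≤ ∏ j ∈ v, ((Zred b m (w j)).card : ℝ) /
                ((Zred b m (w j)).card - ((E j).card : ℝ)) :=
        Finset.prod_induction _ (fun t => 1 ≤ t) (fun a b ha hb => one_le_mul_of_one_le_of_one_le ha hb)
          le_rfl fun j _ => hratio j
      generalize (∏ j ∈ v, ((Zred b m (w j)).card : ℝ) /
                ((Zred b m (w j)).card - ((E j).card : ℝ))) = P at hP ⊢
      have hG : 0 ≤ ∏ j ∈ v, γ j ^ lam := Finset.prod_nonneg fun j _ => Real.rpow_nonneg (hγ j).le _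
      have hg : 0 ≤ γ (d + 1) ^ lam := Real.rpow_nonneg (hγ _).le _
      have hs' := hSpos (d + 1)
      generalize (∏ j ∈ v, γ j ^ lam) = G at hG ⊢
      generalize γ (d + 1) ^ lam = g at hg ⊢
      generalize ((Zred b m (w (d + 1)) \ E (d + 1)).card : ℝ) = c at hs' ⊢
      generalize ((Zred b m (w (d + 1))).card : ℝ) = q at hφ ⊢
      generalize zeta (α * lam) = ζ at hz0 ⊢
      have hpow : (2 * ζ) ^ (v.card + 1) ≤ (4 * ζ) ^ (v.card + 1) :=
        pow_le_pow_left₀ (by positivity) (by linarith) _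
      calc G * (2 * ζ) ^ v.card * (g * (2 * ζ)) / c
          = g * G * (2 * ζ) ^ (v.card + 1) / c := by ring
        _ ≤ g * G * (4 * ζ) ^ (v.card + 1) / c := by gcongr
        _ ≤ g * G * (4 * ζ) ^ (v.card + 1) / c * P := le_mul_of_one_le_right (by positivity) hP
        _ = _ := by field_simp
  have h1 := hind d hds
  rw [one_div, Real.le_rpow_inv_iff_of_pos (e2_nonneg _ hγ _ _)
    (Finset.sum_nonneg fun u _ => hT0 u) hl0]
  exact h1
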